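/- arXiv:2602.08044 — 2 statements merged into one kernel-verified Lean document; each statement's English description precedes it below -/
import Mathlib

section
/- For every L > 0, every m > 0 and every η ∈ (0,2), there exists a constant C₀ > 0 such that for every u ∈ C_c^∞((0,L)): ∫₀^L u'(x)² dx − (1/4) ∫₀^L u(x)²/x² dx ≥ m ∫₀^L u(x)²/x^η dx − C₀ ∫₀^L u(x)² dx. -/
open MeasureTheory Real Set

lemma hp_restrict (f : ℝ → ℝ) (a L : ℝ) (ha : 0 < a) (haL : a ≤ L)
    (h0 : ∀ x ∈ Set.Icc 0 a, f x = 0) :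
    ∫ x in (0 : ℝ)..L, f x = ∫ x in a..L, f x := by
  rw [intervalIntegral.integral_of_le (ha.le.trans haL), intervalIntegral.integral_of_le haL]
  apply setIntegral_eq_of_subset_of_forall_sdiff_eq_zero measurableSet_Ioc
  · exact Set.Ioc_subset_Ioc_left ha.le
  · rintro x ⟨hx1, hx2⟩
    apply h0
    refine ⟨hx1.1.le, ?_⟩
    by_contra h
    exact hx2 ⟨not_le.mp h, hx1.2⟩

/-- The pointwise bound that determines the constant. -/
lemma hp_const (L m η A : ℝ) (hL : 0 < L) (hm : 0 < m) (hA : 0 < A)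
    (hη : η ∈ Set.Ioo (0 : ℝ) 2) :
    ∃ C > (0 : ℝ), ∀ x, 0 < x → x ≤ L →
      A ^ 2 * (x ^ (1 - η)) ^ 2 ≤ m * x ^ (-η) + C := by
  obtain ⟨h0, h2⟩ := hη
  have hd : 0 < 2 - η := by linarith
  set x0 : ℝ := (m / A ^ 2) ^ (1 / (2 - η)) with hx0
  have hx0p : 0 < x0 := by positivity
  have hx0e : x0 ^ (2 - η) = m / A ^ 2 := by
    rw [hx0, ← Real.rpow_mul (by positivity)]
    rw [one_div_mul_cancel hd.ne', Real.rpow_one]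
  refine ⟨A ^ 2 * (x0 ^ (-η) * L ^ (2 - η)), by positivity, fun x hx hxL => ?_⟩
  have e : (x ^ (1 - η)) ^ 2 = x ^ (-η) * x ^ (2 - η) := by
    rw [pow_two, ← Real.rpow_add hx, ← Real.rpow_add hx]
    congr 1; ring
  have hs : 0 < x ^ (-η) := by positivity
  rw [e]
  rcases le_total x x0 with h | h
  · have h1 : x ^ (2 - η) ≤ m / A ^ 2 := by
      rw [← hx0e]; exact Real.rpow_le_rpow hx.le h hd.le
    have h3 : A ^ 2 * x ^ (2 - η) ≤ m := by
      rw [le_div_iff₀ (by positivity)] at h1; linarith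
    have h4 : 0 < A ^ 2 * (x0 ^ (-η) * L ^ (2 - η)) := by positivity
    nlinarith [mul_le_mul_of_nonneg_left h3 hs.le]
  · have h1 : x ^ (2 - η) ≤ L ^ (2 - η) := Real.rpow_le_rpow hx.le hxL hd.le
    have h3 : x ^ (-η) ≤ x0 ^ (-η) := Real.rpow_le_rpow_of_nonpos hx0p h (by linarith)
    have h4 : x ^ (-η) * x ^ (2 - η) ≤ x0 ^ (-η) * L ^ (2 - η) := by gcongr
    have h5 : 0 < m * x ^ (-η) := by positivity
    nlinarith [mul_le_mul_of_nonneg_left h4 (sq_nonneg A)]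

/-- One-dimensional Hardy–Poincaré (improved Hardy) inequality: for every `L > 0`, `m > 0`
and `η ∈ (0,2)`, there is `C₀ > 0` such that for every `u ∈ C_c^∞((0,L))`,
`∫₀^L u'² − (1/4)∫₀^L u²/x² ≥ m ∫₀^L u²/x^η − C₀ ∫₀^L u²`. -/
theorem hardy_poincare_inequality (L m η : ℝ) (hL : 0 < L) (hm : 0 < m)
    (hη : η ∈ Set.Ioo (0 : ℝ) 2) :
    ∃ C₀ > (0 : ℝ), ∀ u : ℝ → ℝ,
      ContDiff ℝ (⊤ : ℕ∞) u → HasCompactSupport u → tsupport u ⊆ Set.Ioo 0 L →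
      m * (∫ x in (0 : ℝ)..L, (u x) ^ 2 / x ^ η) - C₀ * (∫ x in (0 : ℝ)..L, (u x) ^ 2)
        ≤ (∫ x in (0 : ℝ)..L, (deriv u x) ^ 2)
          - (1 / 4) * ∫ x in (0 : ℝ)..L, (u x) ^ 2 / x ^ 2 := by
  have hd : 0 < 2 - η := by linarith [hη.2]
  set A : ℝ := 2 * m / (2 - η) with hAdef
  have hA : 0 < A := by positivity
  have hAe : A * (2 - η) = 2 * m := by rw [hAdef]; field_simp
  obtain ⟨C, hC, hCb⟩ := hp_const L m η A hL hm hA hη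
  refine ⟨C, hC, fun u hu _ hsupp => ?_⟩
  have hz : u =ᶠ[nhds 0] 0 := by
    rw [← notMem_tsupport_iff_eventuallyEq]
    intro h; exact lt_irrefl _ (hsupp h).1
  have huL : u L = 0 := by
    apply image_eq_zero_of_notMem_tsupport
    intro h; exact lt_irrefl _ (hsupp h).2
  obtain ⟨ε, hε, hball⟩ := Metric.eventually_nhds_iff.mp hz.eventuallyEq_nhds
  obtain ⟨a, ha, haL, haε⟩ : ∃ a, 0 < a ∧ a ≤ L ∧ a < ε :=
    ⟨min L (ε / 2), by positivity, min_le_left _ _, (min_le_right _ _).trans_lt (by linarith)⟩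
  have hev : ∀ x ∈ Set.Icc 0 a, u =ᶠ[nhds x] 0 := fun x hx => by
    apply hball
    rw [Real.dist_eq, sub_zero, abs_of_nonneg hx.1]
    exact hx.2.trans_lt haε
  have hu0 : ∀ x ∈ Set.Icc 0 a, u x = 0 := fun x hx => (hev x hx).eq_of_nhds
  have hdu0 : ∀ x ∈ Set.Icc 0 a, deriv u x = 0 := fun x hx => by
    rw [(hev x hx).deriv_eq]; simp
  have hua : u a = 0 := hu0 a ⟨ha.le, le_rfl⟩
  rw [hp_restrict (fun x => (u x) ^ 2 / x ^ η) a L ha haL (fun x hx => by simp [hu0 x hx]),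
    hp_restrict (fun x => (u x) ^ 2) a L ha haL (fun x hx => by simp [hu0 x hx]),
    hp_restrict (fun x => (deriv u x) ^ 2) a L ha haL (fun x hx => by simp [hdu0 x hx]),
    hp_restrict (fun x => (u x) ^ 2 / x ^ 2) a L ha haL (fun x hx => by simp [hu0 x hx])]
  have hcu : Continuous u := hu.continuous
  have hcd : Continuous (deriv u) := hu.continuous_deriv (by simp)
  have hdiff : Differentiable ℝ u := hu.differentiable (by simp)
  have hne : ∀ x ∈ Set.uIcc a L, 0 < x := fun x hx => by
    rw [Set.uIcc_of_le haL] at hx; exact ha.trans_le hx.1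
  have hpow : ∀ p : ℝ, ContinuousOn (fun x : ℝ => x ^ p) (Set.uIcc a L) := fun p =>
    continuousOn_id.rpow_const (fun x hx => Or.inl (hne x hx).ne')
  have i1 : IntervalIntegrable (fun x => (u x) ^ 2 / x ^ η) volume a L :=
    ((hcu.pow 2).continuousOn.div (hpow η)
      (fun x hx => (Real.rpow_pos_of_pos (hne x hx) _).ne')).intervalIntegrable
  have i2 : IntervalIntegrable (fun x => (u x) ^ 2) volume a L :=
    (hcu.pow 2).intervalIntegrable _ _
  have i3 : IntervalIntegrable (fun x => (deriv u x) ^ 2) volume a L :=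
    (hcd.pow 2).intervalIntegrable _ _
  have i4 : IntervalIntegrable (fun x => (u x) ^ 2 / x ^ 2) volume a L :=
    ((hcu.pow 2).continuousOn.div (continuous_pow 2).continuousOn
      (fun x hx => (pow_pos (hne x hx) 2).ne')).intervalIntegrable
  -- the derivative of `g u²` with `g = 1/(2x) - A x^(1-η)`
  let D : ℝ → ℝ := fun x =>
    (2⁻¹ * (-(x ^ 2)⁻¹) - A * ((1 - η) * x ^ (1 - η - 1))) * (u x) ^ 2
      + (2⁻¹ * x⁻¹ - A * x ^ (1 - η)) * (2 * u x * deriv u x)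
  have hDc : ContinuousOn D (Set.uIcc a L) := by
    have c1 : ContinuousOn (fun x : ℝ => (x ^ 2)⁻¹) (Set.uIcc a L) :=
      (continuous_pow 2).continuousOn.inv₀ (fun x hx => (pow_pos (hne x hx) 2).ne')
    have c2 : ContinuousOn (fun x : ℝ => x⁻¹) (Set.uIcc a L) :=
      continuousOn_id.inv₀ (fun x hx => (hne x hx).ne')
    have c3 := hpow (1 - η - 1)
    have c4 := hpow (1 - η)
    have c5 := hcu.continuousOn (s := Set.uIcc a L)
    have c6 := hcd.continuousOn (s := Set.uIcc a L)
    exact (((c1.neg.const_mul _).sub ((c3.const_mul _).const_mul _)).mul (c5.pow 2)).add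
      (((c2.const_mul _).sub (c4.const_mul _)).mul ((c5.const_mul _).mul c6))
  have hDi : ∫ x in a..L, D x = 0 := by
    have := intervalIntegral.integral_eq_sub_of_hasDerivAt
      (f := fun x => (2⁻¹ * x⁻¹ - A * x ^ (1 - η)) * (u x) ^ 2) (f' := D) (a := a) (b := L)
      (fun x hx => ?_) hDc.intervalIntegrable
    · rw [this]; simp [hua, huL]
    · have hx0 := (hne x hx).ne'
      have d1 := (hasDerivAt_inv hx0).const_mul (2⁻¹ : ℝ)
      have d2 := (Real.hasDerivAt_rpow_const (p := 1 - η) (Or.inl hx0)).const_mul A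
      have d3 := (hdiff x).hasDerivAt.pow 2
      refine ((d1.sub d2).mul d3).congr_deriv ?_
      simp [D]
  rw [← intervalIntegral.integral_const_mul, ← intervalIntegral.integral_const_mul,
    ← intervalIntegral.integral_const_mul,
    ← intervalIntegral.integral_sub (i1.const_mul m) (i2.const_mul C),
    ← intervalIntegral.integral_sub i3 (i4.const_mul _), ← sub_nonneg,
    ← intervalIntegral.integral_sub (i3.sub (i4.const_mul _))
      ((i1.const_mul m).sub (i2.const_mul C)), ← hDi]
  apply intervalIntegral.integral_mono_on haL hDc.intervalIntegrable
    ((i3.sub (i4.const_mul _)).sub ((i1.const_mul m).sub (i2.const_mul C)))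
  intro x hx
  have hx0 : 0 < x := ha.trans_le hx.1
  have hb := hCb x hx0 hx.2
  have e1 : x ^ (1 - η - 1) = x ^ (-η) := by congr 1; ring
  have e2 : x⁻¹ * x ^ (1 - η) = x ^ (-η) := by
    rw [← Real.rpow_neg_one, ← Real.rpow_add hx0]; congr 1; ring
  have e3 : (x ^ 2)⁻¹ = x⁻¹ ^ 2 := by rw [inv_pow]
  have e4 : (x ^ η)⁻¹ = x ^ (-η) := (Real.rpow_neg hx0.le η).symm
  simp only [D, div_eq_mul_inv, e1, e3, e4]
  generalize x ^ (-η) = s at *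
  generalize x ^ (1 - η) = t at *
  generalize x⁻¹ = r at *
  generalize u x = w at *
  generalize deriv u x = v at *
  have k1 := mul_le_mul_of_nonneg_right hb (sq_nonneg w)
  have k2 := sq_nonneg (v - (2⁻¹ * r - A * t) * w)
  have k3 : A * (r * t) * w ^ 2 = A * s * w ^ 2 := by rw [e2]
  have k4 : A * (2 - η) * (s * w ^ 2) = 2 * m * (s * w ^ 2) := by rw [hAe]
  nlinarith [k1, k2, k3, k4]
end

section
/- Let T > 0, L > 0, 0 < a < L, A > 0 and c > 0, and let θ ∈ C²((0,T)) satisfy θ(t) ≥ 1, |θ'(t)| ≤ c θ(t)² and |θ''(t)| ≤ c θ(t)³ for every t ∈ (0,T). For ξ > 0 define ψ(t,x) = A ξ θ(t) + θ(t) − √ξ θ(t) ( (x−a)²/2 − 2L(x−a) ), F(t,x) = ∂_t ψ − (∂_x ψ)² + ξ² x², and G(t,x) = 2 ∂_x ψ · ∂_x F − ∂_t F + ∂_x⁴ ψ. Then there exists ξ₀ > 0 such that for every ξ ≥ ξ₀ and every (t,x) ∈ (0,T) × (a,L): G(t,x) ≥ 2 (L+a)² ξ^{3/2} θ(t)³.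 -/
open MeasureTheory Real Set

/-- The Carleman weight `ψ(t,x) = Aξθ(t) + θ(t) − √ξ θ(t)((x−a)²/2 − 2L(x−a))`. -/
noncomputable def psiW (A ξ a L : ℝ) (θ : ℝ → ℝ) (t x : ℝ) : ℝ :=
  A * ξ * θ t + θ t - Real.sqrt ξ * θ t * ((x - a) ^ 2 / 2 - 2 * L * (x - a))

/-- `F(t,x) = ∂_t ψ − (∂_x ψ)² + ξ²x²`. -/
noncomputable def Fcoef (A ξ a L : ℝ) (θ : ℝ → ℝ) (t x : ℝ) : ℝ :=
  deriv (fun s => psiW A ξ a L θ s x) t - (deriv (fun y => psiW A ξ a L θ t y) x) ^ 2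
    + ξ ^ 2 * x ^ 2

/-- `G(t,x) = 2 ∂_x ψ · ∂_x F − ∂_t F + ∂_x⁴ ψ`. -/
noncomputable def Gcoef (A ξ a L : ℝ) (θ : ℝ → ℝ) (t x : ℝ) : ℝ :=
  2 * deriv (fun y => psiW A ξ a L θ t y) x * deriv (fun y => Fcoef A ξ a L θ t y) x
    - deriv (fun s => Fcoef A ξ a L θ s x) t
    + (deriv^[4] (fun y => psiW A ξ a L θ t y)) x


lemma psiW_dx (A ξ a L : ℝ) (θ : ℝ → ℝ) (t : ℝ) :
    deriv (fun y => psiW A ξ a L θ t y) = fun x => Real.sqrt ξ * θ t * (2 * L + a - x) := by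
  funext x
  have h1 : HasDerivAt (fun y : ℝ => y - a) 1 x := (hasDerivAt_id x).sub_const a
  have h := (((h1.pow 2).div_const 2).sub (h1.const_mul (2 * L))).const_mul (Real.sqrt ξ * θ t)
  have h2 := h.const_sub (A * ξ * θ t + θ t)
  refine h2.deriv.trans ?_
  push_cast
  ring

lemma psiW_dx4 (A ξ a L : ℝ) (θ : ℝ → ℝ) (t x : ℝ) :
    (deriv^[4] (fun y => psiW A ξ a L θ t y)) x = 0 := by
  have h : deriv (fun x => Real.sqrt ξ * θ t * (2 * L + a - x))
      = fun _ => Real.sqrt ξ * θ t * (-1) := by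
    funext x
    exact (((hasDerivAt_id x).const_sub (2 * L + a)).const_mul (Real.sqrt ξ * θ t)).deriv
  simp only [Function.iterate_succ, Function.iterate_zero, Function.comp, psiW_dx, h, id]
  simp

lemma psiW_dt (A ξ a L : ℝ) (θ : ℝ → ℝ) (t x : ℝ) :
    deriv (fun s => psiW A ξ a L θ s x) t
      = deriv θ t * (A * ξ + 1 - Real.sqrt ξ * ((x - a) ^ 2 / 2 - 2 * L * (x - a))) := by
  have h : (fun s => psiW A ξ a L θ s x) = fun s =>
      θ s * (A * ξ + 1 - Real.sqrt ξ * ((x - a) ^ 2 / 2 - 2 * L * (x - a))) := by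
    funext s
    simp only [psiW]
    ring
  rw [h]
  exact deriv_mul_const_field _

lemma Fcoef_eq (A ξ a L : ℝ) (θ : ℝ → ℝ) (t x : ℝ) :
    Fcoef A ξ a L θ t x
      = deriv θ t * (A * ξ + 1 - Real.sqrt ξ * ((x - a) ^ 2 / 2 - 2 * L * (x - a)))
        - (Real.sqrt ξ * θ t * (2 * L + a - x)) ^ 2 + ξ ^ 2 * x ^ 2 := by
  simp only [Fcoef, psiW_dt, psiW_dx]

lemma Fcoef_dx (A ξ a L : ℝ) (θ : ℝ → ℝ) (t x : ℝ) :
    deriv (fun y => Fcoef A ξ a L θ t y) x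
      = deriv θ t * Real.sqrt ξ * (2 * L + a - x)
        + 2 * (Real.sqrt ξ * θ t) ^ 2 * (2 * L + a - x) + 2 * ξ ^ 2 * x := by
  simp only [Fcoef_eq]
  have h1 : HasDerivAt (fun y : ℝ => y - a) 1 x := (hasDerivAt_id x).sub_const a
  have h := (((h1.pow 2).div_const 2).sub (h1.const_mul (2 * L))).const_mul (Real.sqrt ξ)
  have h2 := (h.const_sub (A * ξ + 1)).const_mul (deriv θ t)
  have h3 := (((hasDerivAt_id x).const_sub (2 * L + a)).const_mul (Real.sqrt ξ * θ t)).pow 2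
  have h4 := ((hasDerivAt_id x).pow 2).const_mul (ξ ^ 2)
  refine ((h2.sub h3).add h4).deriv.trans ?_
  simp
  ring

lemma Fcoef_dt (A ξ a L : ℝ) (θ : ℝ → ℝ) (t x : ℝ) (h0 : DifferentiableAt ℝ θ t)
    (h1 : DifferentiableAt ℝ (deriv θ) t) :
    deriv (fun s => Fcoef A ξ a L θ s x) t
      = deriv (deriv θ) t * (A * ξ + 1 - Real.sqrt ξ * ((x - a) ^ 2 / 2 - 2 * L * (x - a)))
        - 2 * Real.sqrt ξ ^ 2 * θ t * deriv θ t * (2 * L + a - x) ^ 2 := by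
  simp only [Fcoef_eq]
  have h2 := h1.hasDerivAt.mul_const
    (A * ξ + 1 - Real.sqrt ξ * ((x - a) ^ 2 / 2 - 2 * L * (x - a)))
  have h3 := ((h0.hasDerivAt.const_mul (Real.sqrt ξ)).mul_const (2 * L + a - x)).pow 2
  refine ((h2.sub h3).add_const (ξ ^ 2 * x ^ 2)).deriv.trans ?_
  simp
  ring

/-- Positivity of the zeroth-order Carleman coefficient: under the stated bounds on
`θ, θ', θ''`, there is `ξ₀ > 0` such that for every `ξ ≥ ξ₀` and every
`(t,x) ∈ (0,T) × (a,L)`, `G(t,x) ≥ 2(L+a)² ξ^{3/2} θ(t)³`. -/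
theorem carleman_zeroth_order_positivity (T L a A c : ℝ) (θ : ℝ → ℝ)
    (hT : 0 < T) (hL : 0 < L) (ha : 0 < a) (haL : a < L) (hA : 0 < A) (hc : 0 < c)
    (hθ : ContDiffOn ℝ 2 θ (Set.Ioo 0 T))
    (hθ1 : ∀ t ∈ Set.Ioo (0 : ℝ) T, 1 ≤ θ t)
    (hθ' : ∀ t ∈ Set.Ioo (0 : ℝ) T, |deriv θ t| ≤ c * (θ t) ^ 2)
    (hθ'' : ∀ t ∈ Set.Ioo (0 : ℝ) T, |deriv (deriv θ) t| ≤ c * (θ t) ^ 3) :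
    ∃ ξ₀ > (0 : ℝ), ∀ ξ ≥ ξ₀, ∀ t ∈ Set.Ioo (0 : ℝ) T, ∀ x ∈ Set.Ioo a L,
      2 * (L + a) ^ 2 * ξ ^ ((3 : ℝ) / 2) * (θ t) ^ 3 ≤ Gcoef A ξ a L θ t x := by
  have hLa : 0 < (L + a) ^ 2 := by positivity
  set K : ℝ := 1 + 4 * c + c * (A + 1 + 2 * L ^ 2) / (L + a) ^ 2 with hK
  have hq : 0 < c * (A + 1 + 2 * L ^ 2) / (L + a) ^ 2 := by positivity
  have hK0 : 0 < K := by positivity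
  refine ⟨K ^ 2, by positivity, ?_⟩
  intro ξ hξ t ht x hx
  have hξ0 : 0 ≤ ξ := le_trans (by positivity) hξ
  have hs : K ≤ Real.sqrt ξ := Real.le_sqrt_of_sq_le hξ
  have hpow : ξ ^ ((3 : ℝ) / 2) = Real.sqrt ξ ^ 3 := by
    rw [Real.sqrt_eq_rpow, ← Real.rpow_natCast, ← Real.rpow_mul hξ0]
    norm_num
  have hnhds : Set.Ioo 0 T ∈ nhds t := isOpen_Ioo.mem_nhds ht
  have hd0 : DifferentiableAt ℝ θ t := (hθ.differentiableOn (by norm_num)).differentiableAt hnhds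
  have hd1 : DifferentiableAt ℝ (deriv θ) t :=
    ((hθ.deriv_of_isOpen (m := 1) isOpen_Ioo (by norm_num)).differentiableOn
      (by norm_num)).differentiableAt hnhds
  have e1 := hθ1 t ht
  have e2 := hθ' t ht
  have e3 := hθ'' t ht
  rw [hpow, Gcoef, psiW_dx4, Fcoef_dt _ _ _ _ _ _ _ hd0 hd1, Fcoef_dx, psiW_dx]
  have hsq : Real.sqrt ξ ^ 2 = ξ := Real.sq_sqrt hξ0
  obtain ⟨hx1, hx2⟩ := hx
  generalize Real.sqrt ξ = s at *
  subst hsq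
  generalize deriv (deriv θ) t = v at *
  generalize deriv θ t = u at *
  generalize θ t = w at *
  have hs1 : 1 ≤ s := by linarith
  have hs4 : 4 * c ≤ s := by linarith
  have hsq : c * (A + 1 + 2 * L ^ 2) ≤ s * (L + a) ^ 2 := by
    rw [← div_le_iff₀ hLa]
    linarith
  have hw0 : 0 < w := by linarith
  have hw3 : 0 < w ^ 3 := by positivity
  have hs0 : 0 < s := by linarith
  set m := 2 * L + a - x with hm
  have hmLa : L + a ≤ m := by linarith
  have hm0 : 0 < m := by linarith
  have hm2 : (L + a) ^ 2 ≤ m ^ 2 := by gcongr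
  -- bracket bounds
  set B := A * s ^ 2 + 1 - s * ((x - a) ^ 2 / 2 - 2 * L * (x - a)) with hB
  have hp0 : 0 ≤ 2 * L * (x - a) - (x - a) ^ 2 / 2 := by nlinarith
  have hp1 : 2 * L * (x - a) - (x - a) ^ 2 / 2 ≤ 2 * L ^ 2 := by nlinarith [sq_nonneg (x - a)]
  have hB0 : 0 ≤ B := by
    have h1 := mul_nonneg hs0.le hp0
    have h2 : 0 ≤ A * s ^ 2 := by positivity
    rw [hB]; linarith
  have hB1 : B ≤ (A + 1 + 2 * L ^ 2) * s ^ 2 := by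
    have h1 := mul_le_mul_of_nonneg_left hp1 hs0.le
    have h2 : s ≤ s ^ 2 := by nlinarith
    have h3 : s * (2 * L ^ 2) ≤ s ^ 2 * (2 * L ^ 2) := by gcongr
    rw [hB]; linarith
  have hvB : v * B ≤ s ^ 3 * w ^ 3 * (L + a) ^ 2 := by
    calc v * B ≤ (c * w ^ 3) * B := mul_le_mul_of_nonneg_right (le_of_abs_le e3) hB0
      _ ≤ (c * w ^ 3) * ((A + 1 + 2 * L ^ 2) * s ^ 2) := by gcongr
      _ = (c * (A + 1 + 2 * L ^ 2)) * (w ^ 3 * s ^ 2) := by ring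
      _ ≤ (s * (L + a) ^ 2) * (w ^ 3 * s ^ 2) := by gcongr
      _ = _ := by ring
  have hu : - (s ^ 3 * w ^ 3 * m ^ 2) ≤ 4 * s ^ 2 * w * u * m ^ 2 := by
    have h1 : -(c * w ^ 2) ≤ u := neg_le_of_abs_le e2
    have h2 : (4 * s ^ 2 * w * m ^ 2) * (-(c * w ^ 2)) ≤ (4 * s ^ 2 * w * m ^ 2) * u := by gcongr
    have h3 : (4 * c) * (s ^ 2 * w ^ 3 * m ^ 2) ≤ s * (s ^ 2 * w ^ 3 * m ^ 2) := by gcongr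
    linarith
  have hx0 : 0 < x := by linarith
  have h5 : 0 ≤ s ^ 5 * w * x * m := by positivity
  have h6 : s ^ 3 * w ^ 3 * (L + a) ^ 2 ≤ s ^ 3 * w ^ 3 * m ^ 2 := by gcongr
  linarith
end
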